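/- arXiv:1602.00436 — 2 statements merged into one kernel-verified Lean document; each statement's English description precedes it below -/
import Mathlib

section
/- For every integer n ≥ 1 and all real x with 0 < x < π/2, (2^{2n+2}(2^{2n+2}−1)|B_{2n+2}| / (2n+2)!)·x^{2n}·tan x < tan x − Σ_{k=1}^{n} (2^{2k}(2^{2k}−1)|B_{2k}| / (2k)!)·x^{2k−1} < (2/π)^{2n}·x^{2n}·tan x. -/
open Real

/-!
With `c m = 2 / (π (2 m + 1))`, the Maclaurin coefficients of `tan` are the power sums
`a k = ∑' m, 2 * c m ^ (2 * k)` (Euler's evaluation of `ζ (2 k)`, restricted to odd integers), and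
the partial fraction expansion reads `tan x = ∑' m, 2 * c m ^ 2 * x / (1 - (c m * x) ^ 2)` (it is
the odd part of the Mittag-Leffler expansion of the cotangent, since `tan x = cot x - 2 cot (2 x)`).
Subtracting finite geometric sums termwise, the remainder of the Maclaurin series is
`x ^ (2 n) * ∑' m, p m * f m * g m`, where `p m = 2 * c m ^ 2`, `f m = c m ^ (2 n)` and
`g m = x / (1 - (c m * x) ^ 2)`.

The upper bound follows from `f m ≤ f 0 = (2 / π) ^ (2 n)` for all `m`, strict for `m = 1`. For the
lower bound, `∑' p m = a 1 = 1`, so that `p` is a probability weight; `f` and `g` are both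
decreasing in `m`, and Chebyshev's sum inequality gives
`(∑' p m * f m) * (∑' p m * g m) < ∑' p m * f m * g m`, in which the left-hand side is
`a (n + 1) * tan x`.
-/

/-- The reciprocal `2 / (π (2 m + 1))` of the `m`-th positive pole of the tangent. -/
noncomputable def poleInv (m : ℕ) : ℝ := 2 / (π * (2 * m + 1))

/-- The coefficient of `x ^ (2 k - 1)` in the Maclaurin series of the tangent, for `k ≥ 1`. -/
noncomputable def tanCoeff (k : ℕ) : ℝ :=
  2 ^ (2 * k) * (2 ^ (2 * k) - 1) * |(bernoulli (2 * k) : ℝ)| / (Nat.factorial (2 * k))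

lemma hasSum_odd_of_even {f : ℕ → ℝ} {A B : ℝ} (hf : HasSum f A)
    (he : HasSum (fun m => f (2 * m)) B) : HasSum (fun m => f (2 * m + 1)) (A - B) := by
  have hs : Summable (fun m => f (2 * m + 1)) :=
    hf.summable.comp_injective (i := fun m : ℕ => 2 * m + 1) (fun a b h => by simpa using h)
  have h := (he.even_add_odd hs.hasSum).unique hf
  rw [← h, add_sub_cancel_left]
  exact hs.hasSum

lemma hasSum_tanCoeff {k : ℕ} (hk : k ≠ 0) :
    HasSum (fun m => 2 * poleInv m ^ (2 * k)) (tanCoeff k) := by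
  have h0 := hasSum_zeta_nat hk
  set Z : ℝ := (-1 : ℝ) ^ (k + 1) * (2 : ℝ) ^ (2 * k - 1) * π ^ (2 * k) *
    bernoulli (2 * k) / (2 * k).factorial with hZ
  -- The sign of the Bernoulli number is read off from the positivity of the zeta value.
  have hZabs : Z = 2 ^ (2 * k) / 2 * π ^ (2 * k) * |(bernoulli (2 * k) : ℝ)| /
      (2 * k).factorial := by
    have hpos : 0 ≤ Z := h0.nonneg fun m => by positivity
    rw [← abs_of_nonneg hpos, hZ, abs_div, abs_mul, abs_mul, abs_mul, abs_pow, abs_neg, abs_one,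
      one_pow, one_mul, abs_of_pos (by positivity : (0 : ℝ) < 2 ^ (2 * k - 1)),
      abs_of_pos (by positivity : (0 : ℝ) < π ^ (2 * k)), Nat.abs_cast]
    congr 3
    rw [eq_div_iff two_ne_zero, ← pow_succ]
    congr 1
    omega
  have he : HasSum (fun m : ℕ => 1 / ((2 * m : ℕ) : ℝ) ^ (2 * k)) (Z / 2 ^ (2 * k)) := by
    convert! h0.div_const (2 ^ (2 * k)) using 2 with m
    push_cast
    rw [mul_pow, div_div, mul_comm]
  have ho := (hasSum_odd_of_even h0 he).mul_left (2 * (2 / π) ^ (2 * k))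
  convert! ho using 1
  · ext m
    rw [poleInv]
    push_cast
    rw [← div_div, div_pow (2 / π)]
    ring
  · rw [hZabs, tanCoeff, div_pow]
    have := pi_pos
    field_simp

lemma tanCoeff_one : tanCoeff 1 = 1 := by
  have h : bernoulli 2 = 1 / 6 := by
    rw [bernoulli_eq_bernoulli'_of_ne_one (by norm_num), bernoulli'_two]
  norm_num [tanCoeff, h, Nat.factorial]

/-- Mittag-Leffler expansion of the cotangent. The term `n = 0` equals `2 / y`, twice the polar part
`1 / y` of `cot y`; this accounts for the extra `1 / y` in the sum and makes the terms of even
index in the expansion at `2 * x` proportional to those of the expansion at `x`. -/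
lemma hasSum_cot {y : ℝ} (h1 : 0 < y) (h2 : y < π) :
    HasSum (fun n : ℕ => 2 * y / (y ^ 2 - n ^ 2 * π ^ 2)) (cos y / sin y + 1 / y) := by
  have hpi := pi_pos
  set z : ℝ := y / π with hz
  have hz0 : 0 < z := by positivity
  have hz1 : z < 1 := (div_lt_one hpi).2 h2
  have hyz : y = π * z := by rw [hz]; field_simp
  have hmem : (z : ℂ) ∈ Complex.integerComplement := by
    rintro ⟨a, ha⟩
    have ha' : (a : ℝ) = z := by exact_mod_cast ha
    have h3 : (0 : ℝ) < a := by rw [ha']; exact hz0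
    have h4 : (a : ℝ) < 1 := by rw [ha']; exact hz1
    norm_cast at h3 h4
    omega
  have h := (summable_cotTerm hmem).hasSum
  rw [← cot_series_rep' hmem] at h
  have hR : HasSum (fun n : ℕ => 2 * z * (1 / ((z + (n + 1)) * (z - (n + 1)))))
      (π * (cos y / sin y) - 1 / z) := by
    rw [← Complex.hasSum_ofReal]
    convert! h using 1
    · ext n
      rw [cotTerm_identity hmem]
      push_cast
      rfl
    · rw [Complex.cot, hyz]
      push_cast
      rfl
  rw [← hasSum_nat_add_iff' 1]
  convert! hR.div_const π using 1
  · ext n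
    have h3 : z - (n + 1) ≠ 0 := by
      have : (0 : ℝ) ≤ n := n.cast_nonneg
      linarith
    have h4 : z + (n + 1) ≠ 0 := by positivity
    have h5 : (π * z) ^ 2 - ((n + 1 : ℕ) : ℝ) ^ 2 * π ^ 2
        = π ^ 2 * ((z + (n + 1)) * (z - (n + 1))) := by push_cast; ring
    rw [hyz, h5]
    field_simp
  · rw [hyz]
    simp
    field_simp
    ring

/-- Partial fractions of the tangent, the odd-indexed part of `cot x - 2 cot (2 x)`. -/
lemma hasSum_tan {x : ℝ} (h1 : 0 < x) (h2 : x < π / 2) :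
    HasSum (fun m => 2 * poleInv m ^ 2 * (x / (1 - (poleInv m * x) ^ 2))) (tan x) := by
  have hpi := pi_pos
  have hs : 0 < sin x := sin_pos_of_pos_of_lt_pi h1 (by linarith)
  have hc : 0 < cos x := cos_pos_of_mem_Ioo ⟨by linarith, h2⟩
  have hA := (hasSum_cot (y := 2 * x) (by linarith) (by linarith)).mul_left 2
  have hB := hasSum_cot h1 (by linarith)
  have ho := (hasSum_odd_of_even hA (B := cos x / sin x + 1 / x) (by
    convert! hB using 2 with m
    push_cast
    rw [show (2 * x) ^ 2 - (2 * (m : ℝ)) ^ 2 * π ^ 2 = 4 * (x ^ 2 - m ^ 2 * π ^ 2) by ring,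
      ← mul_div_assoc, show 2 * (2 * (2 * x)) = 4 * (2 * x) by ring,
      mul_div_mul_left _ _ (by norm_num)])).neg
  convert! ho using 1
  · ext m
    push_cast
    have hd : 0 < (π * (2 * m + 1)) ^ 2 - (2 * x) ^ 2 := by
      have : (0 : ℝ) ≤ m := m.cast_nonneg
      have : 0 ≤ π * m := by positivity
      nlinarith
    have h3 : (2 * x) ^ 2 - (2 * (m : ℝ) + 1) ^ 2 * π ^ 2
        = -((π * (2 * m + 1)) ^ 2 - (2 * x) ^ 2) := by ring
    have h4 : 1 - (2 / (π * (2 * m + 1)) * x) ^ 2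
        = ((π * (2 * m + 1)) ^ 2 - (2 * x) ^ 2) / (π * (2 * m + 1)) ^ 2 := by
      field_simp
    rw [h3, poleInv, h4]
    set D := (π * (2 * m + 1)) ^ 2 - (2 * x) ^ 2
    have hq : 0 < π * (2 * (m : ℝ) + 1) := by positivity
    field_simp
  · rw [tan_eq_sin_div_cos, sin_two_mul, cos_two_mul']
    field_simp
    ring

/-- Chebyshev's sum inequality for a countable probability weight `p`: averaging
`(f m - f l) * (g m - g l)` first over `l` and then over `m` yields `2 * (S - F * G)`. -/
lemma chebyshev_lt {p f g : ℕ → ℝ} {F G S : ℝ} (hp : HasSum p 1)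
    (hF : HasSum (fun m => p m * f m) F) (hG : HasSum (fun m => p m * g m) G)
    (hS : HasSum (fun m => p m * f m * g m) S) (hpos : ∀ m, 0 < p m)
    (hfg : ∀ m l, 0 ≤ (f m - f l) * (g m - g l)) (h01 : 0 < (f 0 - f 1) * (g 0 - g 1)) :
    F * G < S := by
  have hin : ∀ m, HasSum (fun l => p l * ((f m - f l) * (g m - g l)))
      (f m * g m - f m * G - g m * F + S) := fun m => by
    convert! (((hp.mul_left (f m * g m)).sub (hG.mul_left (f m))).sub (hF.mul_left (g m))).add hS
      using 1
    · ext l; ring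
    · ring
  have hout : HasSum (fun m => p m * (f m * g m - f m * G - g m * F + S))
      (S - F * G - G * F + S) := by
    convert! ((hS.sub (hF.mul_right G)).sub (hG.mul_right F)).add (hp.mul_right S) using 1
    · ext m; ring
    · ring
  have hnn : ∀ m, 0 ≤ f m * g m - f m * G - g m * F + S := fun m =>
    (hin m).nonneg fun l => mul_nonneg (hpos l).le (hfg m l)
  have h0 : 0 < f 0 * g 0 - f 0 * G - g 0 * F + S :=
    (mul_pos (hpos 1) h01).trans_le
      (le_hasSum (hin 0) 1 fun l _ => mul_nonneg (hpos l).le (hfg 0 l))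
  have := (mul_pos (hpos 0) h0).trans_le
    (le_hasSum hout 0 fun m _ => mul_nonneg (hpos m).le (hnn m))
  linarith

lemma geom_remainder (n : ℕ) {c x : ℝ} (h : 1 - (c * x) ^ 2 ≠ 0) :
    2 * c ^ 2 * (x / (1 - (c * x) ^ 2)) - ∑ k ∈ Finset.Icc 1 n, 2 * c ^ (2 * k) * x ^ (2 * k - 1)
      = x ^ (2 * n) * (2 * c ^ 2 * c ^ (2 * n) * (x / (1 - (c * x) ^ 2))) := by
  induction n with
  | zero => simp
  | succ n ih =>
    rw [Finset.sum_Icc_succ_top (by omega), ← sub_sub, ih,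
      show 2 * (n + 1) - 1 = 2 * n + 1 by omega]
    have h' : x / (1 - (c * x) ^ 2) = x + (c * x) ^ 2 * (x / (1 - (c * x) ^ 2)) := by
      rw [← mul_div_assoc, eq_comm, add_div' _ _ _ h]
      ring
    linear_combination x ^ (2 * n) * (2 * c ^ 2 * c ^ (2 * n)) * h'

theorem stmt_11 (n : ℕ) (hn : 1 ≤ n) (x : ℝ) (h1 : 0 < x) (h2 : x < π / 2) :
    2 ^ (2 * n + 2) * (2 ^ (2 * n + 2) - 1) * |(bernoulli (2 * n + 2) : ℝ)| /
        (Nat.factorial (2 * n + 2)) * x ^ (2 * n) * tan x <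
      tan x - ∑ k ∈ Finset.Icc 1 n,
        2 ^ (2 * k) * (2 ^ (2 * k) - 1) * |(bernoulli (2 * k) : ℝ)| /
          (Nat.factorial (2 * k)) * x ^ (2 * k - 1) ∧
    tan x - ∑ k ∈ Finset.Icc 1 n,
        2 ^ (2 * k) * (2 ^ (2 * k) - 1) * |(bernoulli (2 * k) : ℝ)| /
          (Nat.factorial (2 * k)) * x ^ (2 * k - 1) <
      (2 / π) ^ (2 * n) * x ^ (2 * n) * tan x := by
  have hpi := pi_pos
  have hc0 : ∀ m, 0 < poleInv m := fun m => by unfold poleInv; positivity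
  have hzero : poleInv 0 = 2 / π := by simp [poleInv]
  have hanti : StrictAnti poleInv := fun a b hab => by
    have : (a : ℝ) < b := by exact_mod_cast hab
    unfold poleInv
    gcongr
  have hle : ∀ m, poleInv m ≤ 2 / π := fun m => hzero ▸ hanti.antitone (Nat.zero_le m)
  have hd : ∀ m, 0 < 1 - (poleInv m * x) ^ 2 := fun m => by
    have h3 : poleInv m * x < 1 := by
      calc poleInv m * x ≤ 2 / π * x := by gcongr; exact hle m
        _ < 2 / π * (π / 2) := by gcongr
        _ = 1 := by field_simp
    have h4 : 0 < poleInv m * x := mul_pos (hc0 m) h1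
    nlinarith
  have hT := hasSum_tan h1 h2
  have hp : HasSum (fun m => 2 * poleInv m ^ 2) 1 := by
    have := hasSum_tanCoeff one_ne_zero
    rwa [tanCoeff_one] at this
  have hF : HasSum (fun m => 2 * poleInv m ^ 2 * poleInv m ^ (2 * n)) (tanCoeff (n + 1)) := by
    convert! hasSum_tanCoeff (Nat.succ_ne_zero n) using 2 with m
    rw [Nat.succ_eq_add_one]
    ring
  change tanCoeff (n + 1) * x ^ (2 * n) * tan x
      < tan x - ∑ k ∈ Finset.Icc 1 n, tanCoeff k * x ^ (2 * k - 1) ∧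
    tan x - ∑ k ∈ Finset.Icc 1 n, tanCoeff k * x ^ (2 * k - 1)
      < (2 / π) ^ (2 * n) * x ^ (2 * n) * tan x
  set R := tan x - ∑ k ∈ Finset.Icc 1 n, tanCoeff k * x ^ (2 * k - 1) with hRdef
  have hR : HasSum (fun m => x ^ (2 * n) * (2 * poleInv m ^ 2 * poleInv m ^ (2 * n) *
      (x / (1 - (poleInv m * x) ^ 2)))) R := by
    have := hT.sub (hasSum_sum (s := Finset.Icc 1 n)
      (f := fun k m => 2 * poleInv m ^ (2 * k) * x ^ (2 * k - 1)) fun k hk =>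
        (hasSum_tanCoeff (by have := (Finset.mem_Icc.1 hk).1; omega)).mul_right _)
    convert! this using 2 with m
    exact (geom_remainder n (hd m).ne').symm
  have hx : 0 < x ^ (2 * n) := by positivity
  have hS := hR.div_const (x ^ (2 * n))
  simp only [mul_div_cancel_left₀ _ hx.ne'] at hS
  have hf : StrictAnti fun m => poleInv m ^ (2 * n) := fun a b hab =>
    pow_lt_pow_left₀ (hanti hab) (hc0 b).le (by omega)
  have hg : StrictAnti fun m => x / (1 - (poleInv m * x) ^ 2) := fun a b hab => by
    have h3 : (poleInv b * x) ^ 2 < (poleInv a * x) ^ 2 :=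
      pow_lt_pow_left₀ (mul_lt_mul_of_pos_right (hanti hab) h1) (mul_pos (hc0 b) h1).le two_ne_zero
    exact div_lt_div_of_pos_left h1 (hd a) (by linarith)
  constructor
  · have h3 := chebyshev_lt hp hF hT hS (fun m => mul_pos two_pos (pow_pos (hc0 m) 2))
      (fun m l => by
        rcases le_total m l with h | h
        · exact mul_nonneg (sub_nonneg.2 (hf.antitone h)) (sub_nonneg.2 (hg.antitone h))
        · exact mul_nonneg_of_nonpos_of_nonpos (sub_nonpos.2 (hf.antitone h))
            (sub_nonpos.2 (hg.antitone h)))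
      (mul_pos (sub_pos.2 (hf one_pos)) (sub_pos.2 (hg one_pos)))
    rw [lt_div_iff₀ hx] at h3
    linarith
  · have hq : ∀ m, 0 < 2 * poleInv m ^ 2 * (x / (1 - (poleInv m * x) ^ 2)) := fun m =>
      mul_pos (mul_pos two_pos (pow_pos (hc0 m) 2)) (div_pos h1 (hd m))
    have hfle : ∀ m, poleInv m ^ (2 * n) ≤ (2 / π) ^ (2 * n) := fun m =>
      pow_le_pow_left₀ (hc0 m).le (hle m) _
    have hf1 : poleInv 1 ^ (2 * n) < (2 / π) ^ (2 * n) := hzero ▸ hf one_pos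
    have h3 := hasSum_lt (i := 1)
      (fun m => by
        have := mul_le_mul_of_nonneg_right (hfle m) (hq m).le
        linarith)
      (by
        have := mul_lt_mul_of_pos_right hf1 (hq 1)
        linarith) hS (hT.mul_left ((2 / π) ^ (2 * n)))
    rw [div_lt_iff₀ hx] at h3
    linarith
end

section
/- For every integer n ≥ 2 and all real x with 0 < x < π/2, (2(−1)^n/(2n+1)! + 2^{2n+2}(2^{2n+2}−1)|B_{2n+2}|/(2n+2)!)·x^{2n−1}·tan x < 2·(sin x/x) + (tan x)/x − [3 + Σ_{k=3}^{n} (2(−1)^{k−1}/(2k−1)! + 2^{2k}(2^{2k}−1)|B_{2k}|/(2k)!)·x^{2k−2}] < (2/π)^{2n}·x^{2n−1}·tan x. -/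
/-!
Write `T_k` for the Taylor coefficients of `tan` (`tanCoeff`) and `c_k` for those of
`2 sin + tan` (`huygensCoeff`). Since `c_1 = 3` and `c_2 = 0`, the middle expression, multiplied by
`x`, is the Taylor remainder `∑_{j ≥ 0} c_{n+j+1} x^{2(n+j)+1}`, whereas the outer expressions,
multiplied by `x`, are `c_{n+1} T_{j+1}` and `(2/π)^{2n} T_{j+1}` summed against the same powers
of `x`. Both inequalities hold coefficient by coefficient (`coeff_lower`, `coeff_upper`), with
equality only at `j = 0` in the lower one.

The coefficient inequalities rest on `T_k = 2 (2/π)^{2k} λ(2k)` with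
`λ(s) = ∑_m (2m+1)^{-s}` (`tanCoeff_eq`, `hasSum_lambdaVal`): the values `λ(2k)` decrease and are
close to `1`, and the factorial terms coming from the sine are small compared with the powers of
`(2/π)^2` (`inv_factorial_le`). The Taylor series of `tan` on `(0, π/2)` (`hasSum_tan_taylor`) comes
from `tan x = cot x - 2 cot 2x`, the Mittag-Leffler expansion of the cotangent and the zeta values
at even integers.
-/

open Real


/-- The coefficient of `x ^ (2 * k - 1)` in the Taylor series of `2 sin x + tan x`, for `1 ≤ k`. -/
noncomputable def huygensCoeff (k : ℕ) : ℝ :=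
  2 * (-1 : ℝ) ^ (k - 1) / (Nat.factorial (2 * k - 1)) + tanCoeff k

/-- The Dirichlet lambda value `∑ 1 / (2 m + 1) ^ (2 k)`; `hasSum_lambdaVal` shows that
this normalization of the tangent coefficient is that sum. -/
noncomputable def lambdaVal (k : ℕ) : ℝ := tanCoeff k / (2 * ((2 / π) ^ 2) ^ k)

/-! ### Zeta and lambda values -/

lemma hasSum_zeta_abs {k : ℕ} (hk : k ≠ 0) :
    HasSum (fun m : ℕ => 1 / ((m : ℝ) + 1) ^ (2 * k))
      (2 ^ (2 * k) * π ^ (2 * k) * |(bernoulli (2 * k) : ℝ)| / (2 * (Nat.factorial (2 * k)))) := by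
  have h := hasSum_zeta_nat hk
  have hnn := h.nonneg (fun n => by positivity)
  rw [← abs_of_nonneg hnn] at h
  have h' := (hasSum_nat_add_iff' 1).mpr h
  have h2k : 2 * k ≠ 0 := by omega
  simp only [Finset.sum_range_one, Nat.cast_zero, zero_pow h2k, div_zero, sub_zero,
    Nat.cast_add, Nat.cast_one] at h'
  convert! h' using 1
  have e : (2 : ℝ) ^ (2 * k) = 2 * 2 ^ (2 * k - 1) := by
    rw [← pow_succ']; congr 1; omega
  rw [e, abs_div, abs_mul, abs_mul, abs_mul, abs_pow, abs_neg, abs_one, one_pow,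
    abs_of_pos (by positivity : (0 : ℝ) < 2 ^ (2 * k - 1)),
    abs_of_pos (by positivity : (0 : ℝ) < π ^ (2 * k)),
    abs_of_pos (by positivity : (0 : ℝ) < (Nat.factorial (2 * k) : ℝ))]
  field_simp

lemma tanCoeff_eq (k : ℕ) : tanCoeff k = 2 * ((2 / π) ^ 2) ^ k * lambdaVal k := by
  have := pi_pos
  unfold lambdaVal
  field_simp

lemma hasSum_lambdaVal {k : ℕ} (hk : k ≠ 0) :
    HasSum (fun m : ℕ => 1 / (2 * (m : ℝ) + 1) ^ (2 * k)) (lambdaVal k) := by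
  have hz := hasSum_zeta_abs hk
  set Z := 2 ^ (2 * k) * π ^ (2 * k) * |(bernoulli (2 * k) : ℝ)| / (2 * (Nat.factorial (2 * k)))
    with hZ
  have hs : Summable (fun m : ℕ => 1 / (2 * (m : ℝ) + 1) ^ (2 * k)) := by
    refine (hz.summable.comp_injective (i := fun m : ℕ => 2 * m) fun a b h => ?_).congr fun m => ?_
    · simpa using h
    · simp
  -- In `∑ 1 / (m + 1) ^ (2 k)` the odd indices `m` carry the even denominators.
  have ho : HasSum (fun m : ℕ => 1 / (((2 * m + 1 : ℕ) : ℝ) + 1) ^ (2 * k)) (Z / 2 ^ (2 * k)) := by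
    convert! hz.div_const (2 ^ (2 * k)) using 2 with m
    push_cast
    rw [div_div, ← mul_pow]
    ring_nf
  have he : HasSum (fun m : ℕ => 1 / (((2 * m : ℕ) : ℝ) + 1) ^ (2 * k))
      (∑' m : ℕ, 1 / (2 * (m : ℝ) + 1) ^ (2 * k)) := by
    simpa using hs.hasSum
  have hu := (HasSum.even_add_odd (f := fun m : ℕ => 1 / ((m : ℝ) + 1) ^ (2 * k)) he ho).unique hz
  convert! hs.hasSum using 1
  have : lambdaVal k = Z - Z / 2 ^ (2 * k) := by
    have := pi_pos
    rw [hZ, lambdaVal, tanCoeff]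
    rw [← pow_mul, div_pow]
    field_simp
  linarith

lemma one_le_lambdaVal {k : ℕ} (hk : k ≠ 0) : 1 ≤ lambdaVal k := by
  have := le_hasSum (hasSum_lambdaVal hk) 0 (fun j _ => by positivity)
  simpa using this

lemma lambdaVal_anti {j k : ℕ} (hj : j ≠ 0) (hjk : j ≤ k) : lambdaVal k ≤ lambdaVal j := by
  refine hasSum_le (fun m => ?_) (hasSum_lambdaVal (by omega : k ≠ 0)) (hasSum_lambdaVal hj)
  have : (1 : ℝ) ≤ 2 * m + 1 := by linarith [(Nat.cast_nonneg m : (0 : ℝ) ≤ m)]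
  gcongr

/-- Comparison of the `m = 1` terms of the two lambda series. -/
lemma lambdaVal_sub {j k : ℕ} (hj : j ≠ 0) (hjk : j ≤ k) :
    1 / (9 : ℝ) ^ j - 1 / 9 ^ k ≤ lambdaVal j - lambdaVal k := by
  have h := (hasSum_lambdaVal hj).sub (hasSum_lambdaVal (by omega : k ≠ 0))
  have := le_hasSum h 1 (fun m _ => by
    have : (1 : ℝ) ≤ 2 * m + 1 := by linarith [(Nat.cast_nonneg m : (0 : ℝ) ≤ m)]
    rw [sub_nonneg]
    gcongr)
  norm_num [pow_mul] at this ⊢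
  linarith

lemma tanCoeff_pos {k : ℕ} (hk : k ≠ 0) : 0 < tanCoeff k := by
  have := one_le_lambdaVal hk
  have := pi_pos
  rw [tanCoeff_eq]
  positivity

lemma bernoulli_six : bernoulli 6 = 1 / 42 := by
  have h5 : bernoulli' 5 = 0 := bernoulli'_eq_zero_of_odd (by decide) (by norm_num)
  rw [bernoulli_eq_bernoulli'_of_ne_one (by norm_num), bernoulli'_def]
  have c2 : Nat.choose 6 2 = 15 := by decide
  have c3 : Nat.choose 6 4 = 15 := by decide
  norm_num [Finset.sum_range_succ, h5, c2, c3]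

lemma tanCoeff_two : tanCoeff 2 = 1 / 3 := by
  norm_num [tanCoeff, bernoulli_eq_bernoulli'_of_ne_one, bernoulli'_four, Nat.factorial, abs_div]

lemma tanCoeff_three : tanCoeff 3 = 2 / 15 := by
  norm_num [tanCoeff, bernoulli_six, Nat.factorial, abs_div]

/-! ### The Taylor series of the tangent -/

/-- The Mittag-Leffler expansion of the cotangent on the real interval `(0, 1)`. -/
lemma hasSum_cot_real {t : ℝ} (h0 : 0 < t) (h1 : t < 1) :
    HasSum (fun m : ℕ => 2 * t / (((m : ℝ) + 1) ^ 2 - t ^ 2)) (1 / t - π * Real.cot (π * t)) := by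
  have hz : (t : ℂ) ∈ Complex.integerComplement := by
    rw [Complex.mem_integerComplement_iff]
    rintro ⟨n, hn⟩
    have hn' : (n : ℝ) = t := by exact_mod_cast hn
    rw [← hn'] at h0 h1
    have a : 0 < n := by exact_mod_cast h0
    have b : n < 1 := by exact_mod_cast h1
    omega
  have hs := (summable_cotTerm hz).hasSum
  have e := cot_series_rep' hz
  simp only [cotTerm] at hs
  rw [← e] at hs
  rw [← Complex.hasSum_ofReal]
  convert! hs.neg using 1
  · ext m
    have hm : (0 : ℝ) ≤ m := Nat.cast_nonneg m
    have d1 : t - (m + 1) ≠ 0 := by linarith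
    have d2 : t + (m + 1) ≠ 0 := by positivity
    have d3 : ((m : ℝ) + 1) ^ 2 - t ^ 2 ≠ 0 := by
      have : ((m : ℝ) + 1) ^ 2 - t ^ 2 = -((t - (m + 1)) * (t + (m + 1))) := by ring
      rw [this]
      exact neg_ne_zero.mpr (mul_ne_zero d1 d2)
    have : 2 * t / (((m : ℝ) + 1) ^ 2 - t ^ 2) = -(1 / (t - (m + 1)) + 1 / (t + (m + 1))) := by
      rw [div_add_div _ _ d1 d2, ← neg_div, div_eq_div_iff d3 (mul_ne_zero d1 d2)]
      ring
    rw [this]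
    push_cast
    rfl
  · push_cast
    ring

/-- The power series of the cotangent, obtained by expanding each Mittag-Leffler term
geometrically and exchanging the two (nonnegative) sums. -/
lemma hasSum_cot_pow {t : ℝ} (h0 : 0 < t) (h1 : t < 1) :
    HasSum (fun j : ℕ => 2 * t ^ (2 * j + 1) * (2 ^ (2 * (j + 1)) * π ^ (2 * (j + 1)) *
        |(bernoulli (2 * (j + 1)) : ℝ)| / (2 * (Nat.factorial (2 * (j + 1))))))
      (1 / t - π * Real.cot (π * t)) := by
  let F : ℕ × ℕ → ℝ := fun p => 2 * t ^ (2 * p.2 + 1) * (1 / ((p.1 : ℝ) + 1) ^ (2 * (p.2 + 1)))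
  have hF : 0 ≤ F := fun p => by positivity
  have hrow (m : ℕ) : HasSum (fun j => F (m, j)) (2 * t / (((m : ℝ) + 1) ^ 2 - t ^ 2)) := by
    have hm : (0 : ℝ) ≤ m := Nat.cast_nonneg m
    have hlt : t ^ 2 / ((m : ℝ) + 1) ^ 2 < 1 := by
      rw [div_lt_one (by positivity)]
      gcongr
      linarith
    have hd : ((m : ℝ) + 1) ^ 2 - t ^ 2 ≠ 0 := by
      rw [div_lt_one (by positivity)] at hlt
      linarith
    convert! (hasSum_geometric_of_lt_one (by positivity) hlt).mul_left
      (2 * t / ((m : ℝ) + 1) ^ 2) using 1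
    · ext j
      simp only [F]
      rw [div_pow, ← pow_mul, ← pow_mul, mul_add 2 j 1, pow_add _ (2 * j), pow_add _ (2 * j)]
      field_simp
    · field_simp
  have hcol (j : ℕ) := (hasSum_zeta_abs (Nat.succ_ne_zero j)).mul_left (2 * t ^ (2 * j + 1))
  have hsum : Summable F := by
    rw [summable_prod_of_nonneg hF]
    refine ⟨fun m => (hrow m).summable, ?_⟩
    simp_rw [fun m => (hrow m).tsum_eq]
    exact (hasSum_cot_real h0 h1).summable
  have htot : HasSum F (1 / t - π * Real.cot (π * t)) := by
    have := hsum.hasSum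
    rwa [(this.prod_fiberwise hrow).unique (hasSum_cot_real h0 h1)] at this
  exact ((Equiv.prodComm ℕ ℕ).hasSum_iff.mpr htot).prod_fiberwise hcol

lemma hasSum_tan_taylor {x : ℝ} (h0 : 0 < x) (h1 : x < π / 2) :
    HasSum (fun j : ℕ => tanCoeff (j + 1) * x ^ (2 * j + 1)) (tan x) := by
  have hpi := pi_pos
  have a := hasSum_cot_pow (t := x / π) (by positivity) (by rw [div_lt_one hpi]; linarith)
  have b := hasSum_cot_pow (t := 2 * x / π) (by positivity) (by rw [div_lt_one hpi]; linarith)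
  -- `tan x = cot x - 2 * cot (2 * x)`
  convert! ((b.mul_left 2).sub a).div_const π using 1
  · ext j
    rw [tanCoeff, div_pow, div_pow, mul_pow, pow_succ π (2 * j), pow_succ (2 : ℝ) (2 * j),
      mul_add 2 j 1, pow_add π (2 * j), pow_add (2 : ℝ) (2 * j)]
    field_simp
  · have e1 : π * (x / π) = x := by field_simp
    have e2 : π * (2 * x / π) = 2 * x := by field_simp
    have hs : sin x ≠ 0 := (sin_pos_of_pos_of_lt_pi h0 (by linarith)).ne'
    have hc : cos x ≠ 0 := (cos_pos_of_mem_Ioo ⟨by linarith, h1⟩).ne'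
    rw [e1, e2, Real.cot_eq_cos_div_sin, Real.cot_eq_cos_div_sin, tan_eq_sin_div_cos, sin_two_mul,
      cos_two_mul']
    field_simp
    ring

/-! ### Coefficient inequalities -/

lemma q_lower : 0.405 < (2 / π) ^ 2 := by
  have h := pi_lt_d4
  have := pi_pos
  rw [div_pow, lt_div_iff₀ (by positivity)]
  nlinarith

lemma q_upper : (2 / π) ^ 2 < 0.4055 := by
  have h := pi_gt_d4
  have := pi_pos
  rw [div_pow, div_lt_iff₀ (by positivity)]
  nlinarith

/-- The value `lambdaVal 2 = 1 / (6 q ^ 2)`, with `q = (2 / π) ^ 2`, bounds all later ones. -/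
lemma lambdaVal_le {k : ℕ} (hk : 2 ≤ k) : lambdaVal k ≤ 1.017 := by
  refine (lambdaVal_anti (by norm_num) hk).trans ?_
  have hq := q_lower
  rw [lambdaVal, tanCoeff_two, div_le_iff₀ (by positivity)]
  nlinarith

/-- Propagation of a bound `1 / (2 m + 1)! ≤ c * r ^ m` from `m = m₀` to all larger `m`. -/
lemma inv_factorial_le {c r : ℝ} (hr : 1 / 40 ≤ r) (m₀ : ℕ) (hm₀ : 2 ≤ m₀)
    (h : 1 / (Nat.factorial (2 * m₀ + 1) : ℝ) ≤ c * r ^ m₀) (m : ℕ) (hm : m₀ ≤ m) :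
    1 / (Nat.factorial (2 * m + 1) : ℝ) ≤ c * r ^ m := by
  induction m, hm using Nat.le_induction with
  | base => exact h
  | succ m hm ih =>
    have e : Nat.factorial (2 * (m + 1) + 1) = (2 * m + 3) * ((2 * m + 2) *
        Nat.factorial (2 * m + 1)) := by
      rw [show 2 * (m + 1) + 1 = 2 * m + 1 + 1 + 1 by ring, Nat.factorial_succ, Nat.factorial_succ]
    have hm2 : (2 : ℝ) ≤ m := by exact_mod_cast hm₀.trans hm
    have hr0 : 0 ≤ r := by linarith
    have hf : (0 : ℝ) < Nat.factorial (2 * m + 1) := by positivity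
    rw [div_le_iff₀ hf] at ih
    rw [e, div_le_iff₀ (by positivity)]
    push_cast
    have h42 : 1 ≤ r * ((2 * m + 3) * (2 * m + 2)) := by
      have : (42 : ℝ) ≤ (2 * m + 3) * (2 * m + 2) := by nlinarith
      nlinarith
    calc (1 : ℝ) ≤ (c * r ^ m * (Nat.factorial (2 * m + 1))) * (r * ((2 * m + 3) * (2 * m + 2))) :=
          one_le_mul_of_one_le_of_one_le ih h42
      _ = _ := by ring

lemma huygensCoeff_succ (m : ℕ) :
    huygensCoeff (m + 1) = 2 * (-1 : ℝ) ^ m * (1 / (Nat.factorial (2 * m + 1))) +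
      tanCoeff (m + 1) := by
  rw [huygensCoeff, Nat.add_sub_cancel, show 2 * (m + 1) - 1 = 2 * m + 1 by omega]
  ring

lemma huygensCoeff_succ_le (m : ℕ) :
    huygensCoeff (m + 1) ≤ 2 * (1 / (Nat.factorial (2 * m + 1) : ℝ)) + tanCoeff (m + 1) := by
  rw [huygensCoeff_succ]
  have h : (0 : ℝ) < 1 / (Nat.factorial (2 * m + 1)) := by positivity
  rcases neg_one_pow_eq_or ℝ m with e | e <;> rw [e] <;> linarith

lemma le_huygensCoeff_succ (m : ℕ) :
    tanCoeff (m + 1) - 2 * (1 / (Nat.factorial (2 * m + 1) : ℝ)) ≤ huygensCoeff (m + 1) := by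
  rw [huygensCoeff_succ]
  have h : (0 : ℝ) < 1 / (Nat.factorial (2 * m + 1)) := by positivity
  rcases neg_one_pow_eq_or ℝ m with e | e <;> rw [e] <;> linarith

/-- After division by `2 q ^ (n + j + 1)`, where `q = (2 / π) ^ 2`, the tangent parts compare as
`2 q L < 1` with `L` close to `1`; this leaves a margin that absorbs the factorial terms. -/
lemma coeff_lower {n j : ℕ} (hn : 2 ≤ n) (hj : 1 ≤ j) :
    huygensCoeff (n + 1) * tanCoeff (j + 1) < huygensCoeff (n + j + 1) := by
  have hq := q_lower
  have hq' := q_upper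
  -- The constants slightly exceed `1 / (5! q ^ 2)` and `1 / (7! q ^ 3)`.
  have hu := inv_factorial_le (c := 0.051) (r := (2 / π) ^ 2) (by linarith) 2 le_rfl
    (by norm_num [Nat.factorial] at hq ⊢; nlinarith) n hn
  have hv := inv_factorial_le (c := 0.003) (r := (2 / π) ^ 2) (by linarith) 3 (by norm_num)
    (by
      have : (0.405 : ℝ) ^ 3 ≤ ((2 / π) ^ 2) ^ 3 := by gcongr
      norm_num [Nat.factorial] at this ⊢
      linarith) (n + j) (by omega)
  have h1 := huygensCoeff_succ_le n
  have h2 := le_huygensCoeff_succ (n + j)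
  have hT := tanCoeff_pos (Nat.succ_ne_zero j)
  have l1 := lambdaVal_le (k := n + 1) (by omega)
  have l2 := lambdaVal_le (k := j + 1) (by omega)
  have l2' := one_le_lambdaVal (Nat.succ_ne_zero j)
  have l3 := one_le_lambdaVal (Nat.succ_ne_zero (n + j))
  simp only [Nat.succ_eq_add_one] at hT l2' l3
  refine lt_of_le_of_lt (mul_le_mul_of_nonneg_right h1 hT.le) (lt_of_lt_of_le ?_ h2)
  rw [tanCoeff_eq, tanCoeff_eq, tanCoeff_eq]
  set q := (2 / π) ^ 2
  have hq0 : 0 < q := by linarith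
  have hP : 0 < q ^ n := by positivity
  have hR : 0 < q ^ j := by positivity
  rw [pow_add q n j] at hv
  rw [pow_succ q n, pow_succ q j, pow_succ q (n + j), pow_add q n j]
  set P := q ^ n
  set R := q ^ j
  have b1 : 0.102 + 2 * (q * lambdaVal (n + 1)) ≤ 0.927 := by nlinarith
  calc _ ≤ (2 * (0.051 * P) + 2 * (P * q) * lambdaVal (n + 1)) *
        (2 * (R * q) * lambdaVal (j + 1)) := by gcongr
    _ = (0.102 + 2 * (q * lambdaVal (n + 1))) * (2 * P * (R * q) * lambdaVal (j + 1)) := by ring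
    _ ≤ 0.927 * (2 * P * (R * q) * 1.017) := by gcongr
    _ < 2 * (P * R * q) * 1 - 2 * (0.003 * (P * R)) := by
      have : 0 < P * R := by positivity
      nlinarith
    _ ≤ _ := by gcongr

/-- By `lambdaVal_sub`, the difference `λ(2j+2) - λ(2n+2j+2)` is at least `80 / 9 ^ (n + j + 1)`,
which outweighs the sine coefficient. -/
lemma coeff_upper {n : ℕ} (hn : 2 ≤ n) (j : ℕ) :
    huygensCoeff (n + j + 1) < ((2 / π) ^ 2) ^ n * tanCoeff (j + 1) := by
  have hq := q_lower
  by_cases hnj : n + j = 2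
  · -- The estimate by the `m = 1` terms of the lambda series is too weak in this one case.
    obtain ⟨rfl, rfl⟩ : n = 2 ∧ j = 0 := by omega
    rw [huygensCoeff_succ]
    norm_num [tanCoeff_one, tanCoeff_three, Nat.factorial] at hq ⊢
    nlinarith
  -- Any constant between `9 ^ 3 / (7! q ^ 3)` and `80 q / 9` works in place of `3.5`.
  have hv := inv_factorial_le (c := 3.5) (r := (2 / π) ^ 2 / 9) (by linarith) 3 (by norm_num)
    (by
      have : (0.405 : ℝ) ^ 3 ≤ ((2 / π) ^ 2) ^ 3 := by gcongr
      rw [div_pow]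
      norm_num [Nat.factorial] at this ⊢
      linarith) (n + j) (by omega)
  have h1 := huygensCoeff_succ_le (n + j)
  have hl := lambdaVal_sub (j := j + 1) (k := n + j + 1) (by omega) (by omega)
  have h9 : 81 * (1 / (9 : ℝ) ^ (n + j + 1)) ≤ 1 / 9 ^ (j + 1) := by
    have : (9 : ℝ) ^ 2 ≤ 9 ^ n := by gcongr; norm_num
    rw [show n + j + 1 = n + (j + 1) by ring, pow_add _ n, mul_one_div,
      div_le_div_iff₀ (by positivity) (by positivity)]
    nlinarith [pow_pos (by norm_num : (0 : ℝ) < 9) (j + 1)]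
  refine lt_of_le_of_lt h1 ?_
  rw [tanCoeff_eq, tanCoeff_eq]
  set q := (2 / π) ^ 2
  have hq0 : 0 < q := by linarith
  have e : q ^ n * (2 * q ^ (j + 1) * lambdaVal (j + 1)) =
      2 * q ^ (n + j + 1) * lambdaVal (j + 1) := by ring
  have hQ : 0 < q ^ (n + j) * (1 / 9 ^ (n + j)) := by positivity
  rw [e]
  have : 1 / (Nat.factorial (2 * (n + j) + 1) : ℝ) <
      q ^ (n + j + 1) * (lambdaVal (j + 1) - lambdaVal (n + j + 1)) :=
    calc _ ≤ 3.5 * (q / 9) ^ (n + j) := hv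
      _ = 3.5 * (q ^ (n + j) * (1 / 9 ^ (n + j))) := by rw [div_pow]; ring
      _ < q * (80 / 9) * (q ^ (n + j) * (1 / 9 ^ (n + j))) := by gcongr; linarith
      _ = q ^ (n + j + 1) * (80 * (1 / 9 ^ (n + j + 1))) := by
        rw [pow_succ q, pow_succ (9 : ℝ)]; field_simp
      _ ≤ _ := by gcongr; linarith
  linarith

/-! ### Summation -/

lemma sum_huygensCoeff (x : ℝ) {n : ℕ} (hn : 2 ≤ n) :
    ∑ j ∈ Finset.range n, huygensCoeff (j + 1) * x ^ (2 * j + 1) =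
      x * (3 + ∑ k ∈ Finset.Icc 3 n, huygensCoeff k * x ^ (2 * k - 2)) := by
  induction n, hn using Nat.le_induction with
  | base =>
    norm_num [Finset.sum_range_succ, huygensCoeff, tanCoeff_one, tanCoeff_two, Nat.factorial]
    ring
  | succ n hn ih =>
    rw [Finset.sum_range_succ, ih, Finset.sum_Icc_succ_top (by omega),
      show 2 * (n + 1) - 2 = 2 * n by omega]
    ring

/-- The Taylor remainder of `2 sin x + tan x`. -/
lemma hasSum_remainder {n : ℕ} (hn : 2 ≤ n) {x : ℝ} (h0 : 0 < x) (h1 : x < π / 2) :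
    HasSum (fun j : ℕ => huygensCoeff (n + j + 1) * x ^ (2 * (n + j) + 1))
      (x * (2 * (sin x / x) + tan x / x -
        (3 + ∑ k ∈ Finset.Icc 3 n, huygensCoeff k * x ^ (2 * k - 2)))) := by
  have h := ((Real.hasSum_sin x).mul_left 2).add (hasSum_tan_taylor h0 h1)
  have h' : HasSum (fun j : ℕ => huygensCoeff (j + 1) * x ^ (2 * j + 1)) (2 * sin x + tan x) := by
    convert! h using 2 with j
    rw [huygensCoeff_succ]
    ring
  convert! (hasSum_nat_add_iff' n).mpr h' using 1
  · ext j
    rw [add_comm n j]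
  · rw [sum_huygensCoeff x hn]
    field_simp

theorem stmt_14 (n : ℕ) (hn : 2 ≤ n) (x : ℝ) (h1 : 0 < x) (h2 : x < π / 2) :
    (2 * (-1 : ℝ) ^ n / (Nat.factorial (2 * n + 1)) +
        2 ^ (2 * n + 2) * (2 ^ (2 * n + 2) - 1) * |(bernoulli (2 * n + 2) : ℝ)| /
          (Nat.factorial (2 * n + 2))) * x ^ (2 * n - 1) * tan x <
      2 * (sin x / x) + tan x / x -
        (3 + ∑ k ∈ Finset.Icc 3 n,
          (2 * (-1 : ℝ) ^ (k - 1) / (Nat.factorial (2 * k - 1)) +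
            2 ^ (2 * k) * (2 ^ (2 * k) - 1) * |(bernoulli (2 * k) : ℝ)| /
              (Nat.factorial (2 * k))) * x ^ (2 * k - 2)) ∧
    2 * (sin x / x) + tan x / x -
        (3 + ∑ k ∈ Finset.Icc 3 n,
          (2 * (-1 : ℝ) ^ (k - 1) / (Nat.factorial (2 * k - 1)) +
            2 ^ (2 * k) * (2 ^ (2 * k) - 1) * |(bernoulli (2 * k) : ℝ)| /
              (Nat.factorial (2 * k))) * x ^ (2 * k - 2)) <
      (2 / π) ^ (2 * n) * x ^ (2 * n - 1) * tan x := by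
  have hrem := hasSum_remainder hn h1 h2
  have htan := hasSum_tan_taylor h1 h2
  set M := 2 * (sin x / x) + tan x / x -
    (3 + ∑ k ∈ Finset.Icc 3 n, huygensCoeff k * x ^ (2 * k - 2)) with hM
  have hpow : x * x ^ (2 * n - 1) = x ^ (2 * n) := by
    rw [← pow_succ']
    congr 1
    omega
  have hscale (c : ℝ) : HasSum (fun j : ℕ => c * tanCoeff (j + 1) * x ^ (2 * (n + j) + 1))
      (x * (c * x ^ (2 * n - 1) * tan x)) := by
    convert! htan.mul_left (c * x ^ (2 * n)) using 1
    · ext j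
      ring
    · rw [← hpow]
      ring
  have lower : huygensCoeff (n + 1) * x ^ (2 * n - 1) * tan x < M := by
    refine lt_of_mul_lt_mul_left (hasSum_lt (i := 1) (fun j => ?_) ?_ (hscale _) hrem) h1.le
    · rcases Nat.eq_zero_or_pos j with rfl | hj
      · simp [tanCoeff_one]
      · exact mul_le_mul_of_nonneg_right (coeff_lower hn hj).le (by positivity)
    · exact mul_lt_mul_of_pos_right (coeff_lower hn le_rfl) (by positivity)
  have upper : M < (2 / π) ^ (2 * n) * x ^ (2 * n - 1) * tan x := by
    rw [pow_mul]
    refine lt_of_mul_lt_mul_left (hasSum_lt (i := 0) (fun j => ?_) ?_ hrem (hscale _)) h1.le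
    · exact mul_le_mul_of_nonneg_right (coeff_upper hn j).le (by positivity)
    · exact mul_lt_mul_of_pos_right (coeff_upper hn 0) (by positivity)
  exact ⟨lower, upper⟩
end
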